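/- Let P be a preference profile with linear preference orders over a finite set A of alternatives, let L be an agenda over A, let k ≥ 0 be an integer and p ∈ A. There exists a list of k linear orders over A whose addition to P makes p the successive winner under L if and only if adding k voters each having a linear order that ranks p first (with the remaining alternatives in an arbitrary fixed order) makes p the successive winner under L; in particular, whether this succeeds does not depend on how the manipulators order the alternatives other than p. -/

import Mathlib

open scoped Classical

/-- The number of voters in profile `prof` who strictly prefer `b` to `c`. -/
noncomputable def prefCount {α : Type*} {n : ℕ} (prof : Fin n → α → α → Prop) (b c : α) : ℕ :=
  (Finset.univ.filter fun i => prof i b c).card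

/-- Alternative `b` beats alternative `c`: more than `n/2` voters prefer `b` to `c`. -/
def Beats {α : Type*} {n : ℕ} (prof : Fin n → α → α → Prop) (b c : α) : Prop :=
  2 * prefCount prof b c > n

/-- `a` is an `S`-majority winner: more than `n/2` voters prefer `a`
to every alternative of `S \ {a}`. -/
def IsMajWinner {α : Type*} {n : ℕ} (prof : Fin n → α → α → Prop) (S : Finset α) (a : α) :
    Prop :=
  2 * (Finset.univ.filter fun i => ∀ c ∈ S, c ≠ a → prof i a c).card > n

/-- The successive winner for the agenda given as a list: the first alternative of the
agenda that is a majority winner with respect to itself and all later alternatives. -/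
noncomputable def succWinner {α : Type*} [DecidableEq α] {n : ℕ}
    (prof : Fin n → α → α → Prop) : List α → Option α
  | [] => none
  | a :: rest =>
    if IsMajWinner prof ((a :: rest).toFinset) a then some a
    else succWinner prof rest

/-- The amendment winner for the agenda given as a list: the current round winner is
challenged by the next alternative on the agenda, which takes over if it beats it. -/
noncomputable def amendWinner {α : Type*} {n : ℕ}
    (prof : Fin n → α → α → Prop) : List α → Option α
  | [] => none
  | a :: rest => some (rest.foldl (fun win c => if Beats prof c win then c else win) a)

/-!
Moving `p` to the top of some votes can only help `p`: at its own turn on the agenda `p` keeps every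
supporter, and an alternative that comes up before `p` gains none, because its supporters have to
rank it above `p`. Hence the first majority winner, if it was `p`, remains `p`. This applies to
replacing the votes of any successful coalition of manipulators by votes that rank `p` first.
-/

/-- The profile `Q` arises from `P` by letting some voters move `p` to the top of their vote, the
other votes being unchanged. The voters who move `p` may rearrange the remaining alternatives
arbitrarily. -/
def MovesToTop {α : Type*} {n : ℕ} (P Q : Fin n → α → α → Prop) (p : α) : Prop :=
  ∀ i, Q i = P i ∨ ∀ c, c ≠ p → Q i p c ∧ ¬ Q i c p

theorem IsMajWinner.mono {α : Type*} {n : ℕ} {P Q : Fin n → α → α → Prop} {S : Finset α} {a : α}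
    (hPQ : ∀ i, (∀ c ∈ S, c ≠ a → P i a c) → ∀ c ∈ S, c ≠ a → Q i a c)
    (hP : IsMajWinner P S a) : IsMajWinner Q S a :=
  hP.trans_le <| Nat.mul_le_mul_left 2 <| Finset.card_le_card <|
    Finset.monotone_filter_right _ fun i _ => hPQ i

theorem mem_of_succWinner_eq_some {α : Type*} [DecidableEq α] {n : ℕ}
    {P : Fin n → α → α → Prop} {L : List α} {p : α} (h : succWinner P L = some p) : p ∈ L := by
  induction L with
  | nil => simp [succWinner] at h
  | cons a rest ih =>
    rw [succWinner] at h
    split_ifs at h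
    · exact Option.some.inj h ▸ List.mem_cons_self
    · exact List.mem_cons_of_mem a (ih h)

theorem succWinner_eq_some_of_isMajWinner_imp {α : Type*} [DecidableEq α] {m n : ℕ}
    {P : Fin m → α → α → Prop} {Q : Fin n → α → α → Prop} {p : α}
    (hself : ∀ S, IsMajWinner P S p → IsMajWinner Q S p)
    (hother : ∀ S a, a ≠ p → p ∈ S → IsMajWinner Q S a → IsMajWinner P S a)
    {L : List α} (h : succWinner P L = some p) : succWinner Q L = some p := by
  induction L with
  | nil => simp [succWinner] at h
  | cons a rest ih =>
    have hmem : p ∈ (a :: rest).toFinset := List.mem_toFinset.2 (mem_of_succWinner_eq_some h)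
    rw [succWinner] at h ⊢
    split_ifs at h with hP
    · obtain rfl : a = p := Option.some.inj h
      exact if_pos (hself _ hP)
    · split_ifs with hQ
      · by_contra hne
        exact hP (hother _ a (fun hap => hne (congrArg some hap)) hmem hQ)
      · exact ih h

namespace MovesToTop

variable {α : Type*} {n : ℕ} {P Q : Fin n → α → α → Prop} {p : α}

theorem isMajWinner_self (hPQ : MovesToTop P Q p) {S : Finset α} (hP : IsMajWinner P S p) :
    IsMajWinner Q S p := by
  refine hP.mono fun i hi => ?_
  obtain heq | htop := hPQ i
  · rwa [heq]
  · exact fun c _ hc => (htop c hc).1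

theorem isMajWinner_of_ne (hPQ : MovesToTop P Q p) {S : Finset α} {a : α} (ha : a ≠ p)
    (hp : p ∈ S) (hQ : IsMajWinner Q S a) : IsMajWinner P S a := by
  refine hQ.mono fun i hi => ?_
  obtain heq | htop := hPQ i
  · rwa [← heq]
  · exact absurd (hi p hp ha.symm) (htop a ha).2

theorem succWinner_eq_some [DecidableEq α] (hPQ : MovesToTop P Q p) {L : List α}
    (h : succWinner P L = some p) : succWinner Q L = some p :=
  succWinner_eq_some_of_isMajWinner_imp (fun _ => hPQ.isMajWinner_self)
    (fun _ _ => hPQ.isMajWinner_of_ne) h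

end MovesToTop

theorem movesToTop_append {α : Type*} {n k : ℕ} (P : Fin n → α → α → Prop)
    (man : Fin k → α → α → Prop) {r : α → α → Prop} [Std.Asymm r] {p : α}
    (hp : ∀ c, c ≠ p → r p c) :
    MovesToTop (Fin.append P man) (Fin.append P fun _ => r) p := by
  refine Fin.addCases (fun i => Or.inl ?_) (fun j => Or.inr fun c hc => ?_)
  · simp only [Fin.append_left]
  · simpa only [Fin.append_right] using And.intro (hp c hc) (asymm (hp c hc))

theorem exists_isStrictTotalOrder_forall_rel {α : Type*} (p : α) :
    ∃ r : α → α → Prop, IsStrictTotalOrder α r ∧ ∀ c, c ≠ p → r p c := by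
  obtain ⟨_, _⟩ := exists_wellFoundedLT α
  have : Nonempty α := ⟨p⟩
  let _ : OrderBot α := WellFoundedLT.toOrderBot α
  let e : α ≃ α := Equiv.swap p ⊥
  have hep : e p = ⊥ := Equiv.swap_apply_left p ⊥
  refine ⟨e ⁻¹'o (· < ·), (RelEmbedding.preimage e.toEmbedding (· < ·)).isStrictTotalOrder,
    fun c hc => ?_⟩
  change e p < e c
  rw [hep, bot_lt_iff_ne_bot, ← hep]
  exact e.injective.ne hc

theorem stmt7_general {α : Type*} [DecidableEq α] {n : ℕ} (prof : Fin n → α → α → Prop)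
    (L : List α) (k : ℕ) (p : α) :
    (∃ man : Fin k → α → α → Prop, (∀ j, IsStrictTotalOrder α (man j)) ∧
        succWinner (Fin.append prof man) L = some p) ↔
    (∀ r : α → α → Prop, IsStrictTotalOrder α r → (∀ c : α, c ≠ p → r p c) →
        succWinner (Fin.append prof (fun _ : Fin k => r)) L = some p) := by
  constructor
  · rintro ⟨man, -, hman⟩ r _ hp
    exact (movesToTop_append prof man hp).succWinner_eq_some hman
  · intro h
    obtain ⟨r, hr, hp⟩ := exists_isStrictTotalOrder_forall_rel p
    exact ⟨fun _ => r, fun _ => hr, h r hr hp⟩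

/-- A successful manipulation of the successive procedure by `k` voters exists iff letting
all `k` manipulators cast any linear order that ranks `p` first makes `p` the successive
winner; in particular success does not depend on how the manipulators order the
alternatives other than `p`. -/
theorem stmt7 {α : Type*} [Fintype α] [DecidableEq α] {n : ℕ}
    (prof : Fin n → α → α → Prop)
    (hlin : ∀ i, IsStrictTotalOrder α (prof i))
    (L : List α) (hnodup : L.Nodup) (hcomplete : ∀ a : α, a ∈ L)
    (k : ℕ) (p : α) :
    (∃ man : Fin k → α → α → Prop, (∀ j, IsStrictTotalOrder α (man j)) ∧
        succWinner (Fin.append prof man) L = some p) ↔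
    (∀ r : α → α → Prop, IsStrictTotalOrder α r → (∀ c : α, c ≠ p → r p c) →
        succWinner (Fin.append prof (fun _ : Fin k => r)) L = some p) :=
  stmt7_general prof L k p
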